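/- Let (Ω, 𝔉, P) be a probability space and Λ : Ω → [0,∞) an integrable random variable. For each n ≥ 1 let μ_n be the mixed Poisson distribution on ℕ given by μ_n({k}) = ∫_Ω (Λ(ω)/n)^k e^{−Λ(ω)/n} / k! dP(ω), k ∈ ℕ. Then the n-fold convolution μ_n^{∗n} converges weakly, as n → ∞, to the Poisson distribution with parameter ∫_Ω Λ dP. -/

import Mathlib

open MeasureTheory Filter

/-- The characteristic function of a mixed Poisson distribution with mixing variable `X` is
`t ↦ ∫ exp(X(e^{it} - 1))`. -/
lemma charFun_map_cast_mixedPoisson {Ω : Type*} [MeasurableSpace Ω] {P : Measure Ω}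
    {X : Ω → ℝ} (hX : Measurable X) (hX0 : ∀ ω, 0 ≤ X ω) {ν : Measure ℕ} [IsFiniteMeasure ν]
    (hν : ∀ k, ν {k} =
      ∫⁻ ω, ENNReal.ofReal (X ω ^ k * Real.exp (-X ω) / (Nat.factorial k)) ∂P) (t : ℝ) :
    charFun (ν.map (Nat.cast : ℕ → ℝ)) t =
      ∫ ω, Complex.exp (X ω * (Complex.exp (t * Complex.I) - 1)) ∂P := by
  set p : ℕ → Ω → ℝ := fun k ω ↦ X ω ^ k * Real.exp (-X ω) / (Nat.factorial k) with hp
  set e : ℕ → ℂ := fun k ↦ Complex.exp (inner ℝ (k : ℝ) t * Complex.I) with he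
  have he1 (k : ℕ) : ‖e k‖ = 1 := Complex.norm_exp_ofReal_mul_I _
  have hp0 (k : ℕ) (ω : Ω) : 0 ≤ p k ω := by have := hX0 ω; positivity
  have hpm (k : ℕ) : Measurable (p k) := by fun_prop
  have hpint (k : ℕ) : Integrable (p k) P :=
    (lintegral_ofReal_ne_top_iff_integrable (hpm k).aestronglyMeasurable
      (ae_of_all _ (hp0 k))).1 (by rw [← hν k]; exact measure_ne_top _ _)
  have hreal (k : ℕ) : ∫ ω, p k ω ∂P = ν.real {k} := by
    rw [integral_eq_lintegral_of_nonneg_ae (ae_of_all _ (hp0 k)) (hpm k).aestronglyMeasurable,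
      measureReal_def, hν k]
  have hexp (ω : Ω) : Complex.exp (X ω * (Complex.exp (t * Complex.I) - 1)) =
      ∑' k, p k ω • e k := by
    have := ProbabilityTheory.charFun_map_cast_poissonMeasure (.mk (X ω) (hX0 ω)) t
    rw [charFun_apply, integral_map .of_discrete (by fun_prop),
      ProbabilityTheory.integral_poissonMeasure] at this
    simp only [NNReal.coe_mk] at this
    rw [← this]
    simp only [hp, he, mul_comm]
  have he_int : Integrable e ν :=
    .of_bound (C := 1) .of_discrete (ae_of_all _ fun k ↦ (he1 k).le)
  rw [charFun_apply, integral_map .of_discrete (by fun_prop), integral_countable he_int]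
  simp_rw [hexp]
  rw [← integral_tsum_of_summable_integral_norm]
  · simp_rw [integral_smul_const, hreal]
  · exact fun k ↦ (hpint k).smul_const _
  · simp_rw [norm_smul, he1, mul_one, Real.norm_of_nonneg (hp0 _ _), hreal]
    exact summable_measure_toReal (fun _ ↦ .of_discrete)
      fun i j hij ↦ Set.disjoint_singleton.2 hij

lemma Complex.norm_exp_sub_one_le_of_re_nonpos {z : ℂ} (hz : z.re ≤ 0) :
    ‖Complex.exp z - 1‖ ≤ ‖z‖ := by
  have := (convex_halfSpace_re_le 0).norm_image_sub_le_of_norm_deriv_le (f := Complex.exp)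
    (x := 0) (y := z) (C := 1) (fun _ _ ↦ Complex.differentiableAt_exp)
    (fun w hw ↦ by simpa [Complex.norm_exp] using hw) (by simp) hz
  simpa using this

/-- First order expansion at the origin of the Laplace transform of a nonnegative integrable
random variable on the closed left half plane. -/
lemma tendsto_nat_mul_integral_exp_sub_one {Ω : Type*} [MeasurableSpace Ω] {P : Measure Ω}
    [IsProbabilityMeasure P] {X : Ω → ℝ} (hX0 : ∀ ω, 0 ≤ X ω) (hX : Integrable X P)
    {z : ℂ} (hz : z.re ≤ 0) :
    Tendsto (fun n : ℕ ↦ (n : ℂ) * ((∫ ω, Complex.exp ((X ω / n : ℝ) * z) ∂P) - 1)) atTop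
      (nhds ((∫ ω, X ω ∂P : ℝ) * z)) := by
  have hre (n : ℕ) (ω : Ω) : (((X ω / n : ℝ) : ℂ) * z).re ≤ 0 := by
    rw [Complex.re_ofReal_mul]
    exact mul_nonpos_of_nonneg_of_nonpos (div_nonneg (hX0 ω) n.cast_nonneg) hz
  have hmeas (n : ℕ) :
      AEStronglyMeasurable (fun ω ↦ Complex.exp ((X ω / n : ℝ) * z)) P := by
    have := hX.aemeasurable
    exact AEMeasurable.aestronglyMeasurable (by fun_prop)
  have hint (n : ℕ) : Integrable (fun ω ↦ Complex.exp ((X ω / n : ℝ) * z)) P :=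
    .of_bound (C := 1) (hmeas n)
      (ae_of_all _ fun ω ↦ by rw [Complex.norm_exp]; exact Real.exp_le_one_iff.2 (hre n ω))
  have hlhs (n : ℕ) : (n : ℂ) * ((∫ ω, Complex.exp ((X ω / n : ℝ) * z) ∂P) - 1) =
      ∫ ω, (n : ℂ) * (Complex.exp ((X ω / n : ℝ) * z) - 1) ∂P := by
    rw [integral_const_mul, integral_sub (hint n) (integrable_const _)]
    simp
  simp_rw [hlhs]
  rw [← integral_complex_ofReal, ← integral_mul_const]
  refine tendsto_integral_of_dominated_convergence (fun ω ↦ X ω * ‖z‖)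
    (fun n ↦ ((hmeas n).sub aestronglyMeasurable_const).const_mul _) (hX.mul_const _)
    (fun n ↦ ae_of_all _ fun ω ↦ ?_) (ae_of_all _ fun ω ↦ ?_)
  · rcases eq_or_ne n 0 with rfl | hn
    · simpa using mul_nonneg (hX0 ω) (norm_nonneg z)
    · have hnpos : (0 : ℝ) < n := by positivity
      calc ‖(n : ℂ) * (Complex.exp ((X ω / n : ℝ) * z) - 1)‖
          ≤ n * ‖((X ω / n : ℝ) : ℂ) * z‖ := by
            rw [norm_mul, Complex.norm_natCast]
            gcongr
            exact Complex.norm_exp_sub_one_le_of_re_nonpos (hre n ω)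
        _ = X ω * ‖z‖ := by
            rw [norm_mul, Complex.norm_of_nonneg (div_nonneg (hX0 ω) hnpos.le)]
            field_simp
  · have hd : HasDerivAt (fun s : ℝ ↦ Complex.exp (s * (X ω * z))) (X ω * z) 0 := by
      have := ((Complex.ofRealCLM.hasDerivAt (x := 0)).mul_const ((X ω : ℂ) * z)).cexp
      simpa using this
    have hinv : Tendsto (fun n : ℕ ↦ (n : ℝ)⁻¹) atTop (nhdsWithin 0 {0}ᶜ) :=
      (tendsto_inv_atTop_nhdsGT_zero.comp tendsto_natCast_atTop_atTop).mono_right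
        (nhdsWithin_mono _ fun _ h ↦ ne_of_gt h)
    refine ((hasDerivAt_iff_tendsto_slope.1 hd).comp hinv).congr fun n ↦ ?_
    simp only [Function.comp_apply, slope_def_module, sub_zero, inv_inv, Complex.real_smul,
      Complex.ofReal_zero, zero_mul, Complex.exp_zero]
    push_cast
    congr 3
    ring

lemma charFun_map_cast_sum_pi {ι : Type*} [Fintype ι] (ν : Measure ℕ) [IsProbabilityMeasure ν]
    (t : ℝ) :
    charFun (((Measure.pi fun _ : ι ↦ ν).map fun x ↦ ∑ i, x i).map (Nat.cast : ℕ → ℝ)) t =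
      charFun (ν.map (Nat.cast : ℕ → ℝ)) t ^ Fintype.card ι := by
  have : IsProbabilityMeasure (ν.map (Nat.cast : ℕ → ℝ)) :=
    Measure.isProbabilityMeasure_map .of_discrete
  have h := ProbabilityTheory.charFun_map_sum_pi_eq_prod fun _ : ι ↦ ν.map (Nat.cast : ℕ → ℝ)
  rw [← Measure.pi_map_pi (fun _ ↦ .of_discrete), Measure.map_map (by fun_prop) (by fun_prop)] at h
  rw [Measure.map_map .of_discrete (by fun_prop)]
  simpa [Function.comp_def] using congrFun h t

/-- Lévy's convergence theorem for probability measures on `ℕ`, with the conclusion stated in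
terms of probability mass functions. -/
lemma tendsto_singleton_of_tendsto_charFun {ν : ℕ → Measure ℕ} [∀ n, IsProbabilityMeasure (ν n)]
    {ν₀ : Measure ℕ} [IsProbabilityMeasure ν₀]
    (h : ∀ t, Tendsto (fun n ↦ charFun ((ν n).map (Nat.cast : ℕ → ℝ)) t) atTop
      (nhds (charFun (ν₀.map (Nat.cast : ℕ → ℝ)) t))) (k : ℕ) :
    Tendsto (fun n ↦ ν n {k}) atTop (nhds (ν₀ {k})) := by
  have hprob (m : Measure ℕ) [IsProbabilityMeasure m] :
      IsProbabilityMeasure (m.map (Nat.cast : ℕ → ℝ)) :=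
    Measure.isProbabilityMeasure_map .of_discrete
  let ρ (m : Measure ℕ) [IsProbabilityMeasure m] : ProbabilityMeasure ℝ :=
    ⟨m.map (Nat.cast : ℕ → ℝ), hprob m⟩
  have hlim : Tendsto (fun n ↦ ρ (ν n)) atTop (nhds (ρ ν₀)) :=
    ProbabilityMeasure.tendsto_of_tendsto_charFun h
  have hpre : (Nat.cast : ℕ → ℝ) ⁻¹' Set.Ioo (k - 1 / 2 : ℝ) (k + 1 / 2) = {k} := by
    ext j
    simp only [Set.mem_preimage, Set.mem_Ioo, Set.mem_singleton_iff]
    constructor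
    · rintro ⟨h1, h2⟩
      have h3 : (k : ℝ) < (j + 1 : ℕ) := by push_cast; linarith
      have h4 : (j : ℝ) < (k + 1 : ℕ) := by push_cast; linarith
      rw [Nat.cast_lt] at h3 h4
      omega
    · rintro rfl
      constructor <;> linarith
  have hfr : (ν₀.map (Nat.cast : ℕ → ℝ))
      (frontier (Set.Ioo (k - 1 / 2 : ℝ) (k + 1 / 2))) = 0 := by
    rw [Measure.map_apply .of_discrete isClosed_frontier.measurableSet,
      frontier_Ioo (by linarith)]
    convert measure_empty (μ := ν₀)
    ext j
    simp only [Set.mem_preimage, Set.mem_insert_iff, Set.mem_singleton_iff,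
      Set.mem_empty_iff_false, iff_false, not_or]
    constructor <;> intro h1
    · have h2 : ((2 * j + 1 : ℕ) : ℝ) = (2 * k : ℕ) := by push_cast; linarith
      rw [Nat.cast_inj] at h2
      omega
    · have h2 : ((2 * j : ℕ) : ℝ) = (2 * k + 1 : ℕ) := by push_cast; linarith
      rw [Nat.cast_inj] at h2
      omega
  have hρ (m : Measure ℕ) [IsProbabilityMeasure m] :
      (ρ m : Measure ℝ) (Set.Ioo (k - 1 / 2 : ℝ) (k + 1 / 2)) = m {k} := by
    rw [← hpre]
    exact Measure.map_apply .of_discrete measurableSet_Ioo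
  simpa only [hρ] using
    ProbabilityMeasure.tendsto_measure_of_null_frontier_of_tendsto' hlim hfr

/-- Central limit theorem for Cox processes, single-region core: if `μ n` is the
mixed Poisson distribution with mixing variable `Λ/n`, then the `n`-fold
convolution of `μ n` (the law of the sum of `n` i.i.d. copies) converges weakly,
i.e. pointwise in the probability mass functions, to the Poisson distribution
with parameter `∫ Λ dP`. -/
theorem mixed_poisson_convolution_tendsto_poisson {Ω : Type*} [MeasurableSpace Ω]
    (P : Measure Ω) [IsProbabilityMeasure P]
    (Λ : Ω → ℝ) (hΛmeas : Measurable Λ) (hΛ0 : ∀ ω, 0 ≤ Λ ω)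
    (hΛint : Integrable Λ P)
    (μ : ℕ → Measure ℕ) (hμprob : ∀ n, IsProbabilityMeasure (μ n))
    (hμ : ∀ n k, μ n {k} =
      ∫⁻ ω, ENNReal.ofReal
        ((Λ ω / n) ^ k * Real.exp (-(Λ ω / n)) / (Nat.factorial k)) ∂P) :
    ∀ k : ℕ,
      Tendsto
        (fun n : ℕ =>
          ((Measure.pi fun _ : Fin n => μ n).map fun x => ∑ i, x i) {k})
        atTop
        (nhds (ENNReal.ofReal
          ((∫ ω, Λ ω ∂P) ^ k * Real.exp (-(∫ ω, Λ ω ∂P)) / (Nat.factorial k)))) := by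
  intro k
  have hm0 : 0 ≤ ∫ ω, Λ ω ∂P := integral_nonneg hΛ0
  have hlim := ProbabilityTheory.poissonMeasure_singleton (.mk (∫ ω, Λ ω ∂P) hm0) k
  rw [NNReal.coe_mk, mul_comm (Real.exp _)] at hlim
  rw [← hlim]
  have hprob (n : ℕ) : IsProbabilityMeasure
      ((Measure.pi fun _ : Fin n => μ n).map fun x => ∑ i, x i) :=
    Measure.isProbabilityMeasure_map (by fun_prop)
  refine tendsto_singleton_of_tendsto_charFun (fun t ↦ ?_) k
  have hre : (Complex.exp (t * Complex.I) - 1).re ≤ 0 := by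
    simpa [Complex.exp_ofReal_mul_I_re] using Real.cos_le_one t
  rw [ProbabilityTheory.charFun_map_cast_poissonMeasure]
  refine (Complex.tendsto_one_add_pow_exp_of_tendsto
    (tendsto_nat_mul_integral_exp_sub_one hΛ0 hΛint hre)).congr fun n ↦ ?_
  rw [charFun_map_cast_sum_pi, Fintype.card_fin,
    charFun_map_cast_mixedPoisson (hΛmeas.div_const n)
      (fun ω ↦ div_nonneg (hΛ0 ω) n.cast_nonneg) (hμ n), add_sub_cancel]
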